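/- arXiv:2412.21125 — 4 statements merged into one kernel-verified Lean document; each statement's English description precedes it below -/
import Mathlib

section
/- Let X be a nonempty finite subset of ℝⁿ and H a hypothesis on X such that sup_{P ∈ H} P({x}) > 0 for every x ∈ X. Then an optimal e-class for H exists. -/
open MeasureTheory Set ENNReal

noncomputable section

/-- The (topological) support of a Borel measure: the set of points all of whose open
neighbourhoods have positive measure. -/
def msupport {α : Type*} [TopologicalSpace α] [MeasurableSpace α]
    (P : Measure α) : Set α :=
  {x | ∀ U : Set α, IsOpen U → x ∈ U → 0 < P U}

variable {α : Type*} [TopologicalSpace α] [MeasurableSpace α] {X : Set α} {m : ℕ}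

/-- A hypothesis on `X`: a nonempty set of Borel probability measures (on `X`,
identified with the Borel probability measures supported in `X`). -/
def IsHypothesis (H : Set (Measure X)) : Prop :=
  H.Nonempty ∧ ∀ P ∈ H, IsProbabilityMeasure P

/-- An e-variable with respect to `H`: a Borel measurable nonnegative function whose
expectation is at most one under every `P ∈ H`. -/
def IsEVar (H : Set (Measure X)) (E : X → ℝ) : Prop :=
  Measurable E ∧ (∀ x, 0 ≤ E x) ∧ ∀ P ∈ H, ∫⁻ x, ENNReal.ofReal (E x) ∂P ≤ 1

/-- `f` majorises `g` if `f(x) ≥ g(x)` for every `x ∈ X`. -/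
def Majorises (f g : X → ℝ) : Prop := ∀ x, g x ≤ f x

/-- A maximal e-variable: an e-variable with no strict majoriser among e-variables. -/
def IsMaximalEVar (H : Set (Measure X)) (E : X → ℝ) : Prop :=
  IsEVar H E ∧ ¬ ∃ E', IsEVar H E' ∧ Majorises E' E ∧ E' ≠ E

/-- A majorising e-class: an e-class such that every e-variable is majorised by
one of its elements. -/
def IsMajorisingClass (H : Set (Measure X)) (C : Set (X → ℝ)) : Prop :=
  (∀ E ∈ C, IsEVar H E) ∧ ∀ E, IsEVar H E → ∃ E' ∈ C, Majorises E' E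

/-- The optimal e-class: a majorising e-class contained in every majorising e-class. -/
def IsOptimalClass (H : Set (Measure X)) (C : Set (X → ℝ)) : Prop :=
  IsMajorisingClass H C ∧ ∀ C', IsMajorisingClass H C' → C ⊆ C'

/-- `P ∈ P_Φ`: the expectation of the ℓ¹-norm of `Φ` under `P` is finite. -/
def MemPPhi (P : Measure X) (Φ : X → Fin m → ℝ) : Prop :=
  ∫⁻ x, ENNReal.ofReal (∑ i, |Φ x i|) ∂P < ⊤

/-- `Φ` is a constraint for `H`: `Φ` is continuous and `H` is exactly the set of Borel
probability measures `P ∈ P_Φ` with `⟨P, Φ⟩ = 0`. -/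
def IsConstraint (H : Set (Measure X)) (Φ : X → Fin m → ℝ) : Prop :=
  Continuous Φ ∧
    H = {P : Measure X | IsProbabilityMeasure P ∧ MemPPhi P Φ ∧ ∫ x, Φ x ∂P = 0}

/-- A proper constraint: a constraint such that `0` lies in the relative interior
of the convex hull of the image of `Φ`. -/
def IsProperConstraint (H : Set (Measure X)) (Φ : X → Fin m → ℝ) : Prop :=
  IsConstraint H Φ ∧
    (0 : Fin m → ℝ) ∈ intrinsicInterior ℝ (convexHull ℝ (Set.range Φ))

/-- A minimal constraint: a constraint such that `0` lies in the interior
of the convex hull of the image of `Φ`. -/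
def IsMinimalConstraint (H : Set (Measure X)) (Φ : X → Fin m → ℝ) : Prop :=
  IsConstraint H Φ ∧
    (0 : Fin m → ℝ) ∈ interior (convexHull ℝ (Set.range Φ))

/-- A finitely constrained hypothesis: one admitting a constraint. -/
def FinitelyConstrained (H : Set (Measure X)) : Prop :=
  ∃ (m : ℕ) (Φ : X → Fin m → ℝ), IsConstraint H Φ

/-- A properly constrained hypothesis: one admitting a proper constraint. -/
def ProperlyConstrained (H : Set (Measure X)) : Prop :=
  ∃ (m : ℕ) (Φ : X → Fin m → ℝ), IsProperConstraint H Φ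

/-- `Λ_{Φ|S} = {λ ∈ ℝᵐ : sup_{x ∈ S} λ·Φ(x) ≤ 1}`. -/
def LambdaSet (Φ : X → Fin m → ℝ) (S : Set X) : Set (Fin m → ℝ) :=
  {l | ∀ x ∈ S, ∑ i, l i * Φ x i ≤ 1}

/-- The dual e-class `E_H^∨ = {1 - λ·Φ : λ ∈ Λ_Φ}`. -/
def dualClass (Φ : X → Fin m → ℝ) : Set (X → ℝ) :=
  {E | ∃ l ∈ LambdaSet Φ Set.univ, E = fun x => 1 - ∑ i, l i * Φ x i}

/-- A matching set for `H`: a closed set that is exactly the support of some `P ∈ H`. -/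
def IsMatchingSet (H : Set (Measure X)) (S : Set X) : Prop :=
  IsClosed S ∧ ∃ P ∈ H, msupport P = S

end

/-
If a set of functions is pointwise bounded above and closed under pointwise limits, its members above
a given one form a compact set, so by Zorn's lemma each member lies below a maximal one. The
e-variables form such a set: Markov's inequality bounds `E x` by `1 / P {x}`, and Fatou's lemma gives
closedness. The maximal e-variables are then an optimal class, because no other e-variable
majorises a maximal one.
-/

section Order

variable {β : Type*} [Preorder β] [TopologicalSpace β] [ClosedIciTopology β] {s : Set β} {x : β}

theorem exists_le_maximal_of_isCompact (hs : IsCompact s) (hx : x ∈ s) :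
    ∃ m, x ≤ m ∧ Maximal (· ∈ s) m := by
  refine zorn_le_nonempty₀ s (fun c hcs hc y hy ↦ ?_) x hx
  have : Nonempty c := ⟨⟨y, hy⟩⟩
  have finite_upper (u : Finset c) : (s ∩ ⋂ z ∈ u, Ici (z : β)).Nonempty := by
    obtain ⟨z, hz⟩ := hc.directedOn.directed_val.finset_le u
    exact ⟨z, hcs z.2, mem_iInter₂.2 hz⟩
  obtain ⟨m, hms, hm⟩ :=
    hs.inter_iInter_nonempty (fun z : c ↦ Ici (z : β)) (fun _ ↦ isClosed_Ici) finite_upper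
  exact ⟨m, hms, fun z hz ↦ mem_iInter.1 hm ⟨z, hz⟩⟩

theorem exists_le_maximal_of_isClosed_of_bddAbove [CompactIccSpace β] (hs : IsClosed s)
    (hb : BddAbove s) (hx : x ∈ s) : ∃ m, x ≤ m ∧ Maximal (· ∈ s) m := by
  obtain ⟨b, hb⟩ := hb
  have hK : IsCompact (Icc x b ∩ s) := isCompact_Icc.inter_right hs
  obtain ⟨m, hxm, hm⟩ := exists_le_maximal_of_isCompact hK ⟨⟨le_rfl, hb hx⟩, hx⟩
  exact ⟨m, hxm, hm.prop.2, fun z hz hmz ↦ hm.le_of_ge ⟨⟨hxm.trans hmz, hb hz⟩, hz⟩ hmz⟩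

end Order

section EVariable

open Filter Topology

variable {α : Type*} [MeasurableSpace α] {X : Set α} {H : Set (Measure X)} {E : X → ℝ}

theorem isMaximalEVar_iff_maximal : IsMaximalEVar H E ↔ Maximal (IsEVar H) E := by
  simp only [IsMaximalEVar, maximal_iff, not_exists, not_and, not_not, eq_comm (a := E)]
  rfl

theorem isOptimalClass_setOfPred_isMaximalEVar
    (h : ∀ E, IsEVar H E → ∃ E', E ≤ E' ∧ IsMaximalEVar H E') :
    IsOptimalClass H {E | IsMaximalEVar H E} := by
  refine ⟨⟨fun E hE ↦ hE.1, fun E hE ↦ ?_⟩, fun C hC E hE ↦ ?_⟩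
  · obtain ⟨E', hle, hmax⟩ := h E hE
    exact ⟨E', hmax, hle⟩
  · obtain ⟨E', hE'C, hle⟩ := hC.2 E hE.1
    rwa [(isMaximalEVar_iff_maximal.1 hE).eq_of_le (hC.1 E' hE'C) hle]

theorem IsEVar.apply_le_toReal_inv (hE : IsEVar H E) {P : Measure X} (hP : P ∈ H) {x : X}
    (hx : P {x} ≠ 0) : E x ≤ (P {x})⁻¹.toReal := by
  obtain ⟨hmeas, -, hint⟩ := hE
  have markov : ENNReal.ofReal (E x) * P {x} ≤ 1 :=
    calc ENNReal.ofReal (E x) * P {x}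
      _ ≤ ENNReal.ofReal (E x) * P {y | ENNReal.ofReal (E x) ≤ ENNReal.ofReal (E y)} := by
        gcongr
        exact singleton_subset_iff.2 (mem_ofPred.2 le_rfl)
      _ ≤ ∫⁻ y, ENNReal.ofReal (E y) ∂P := mul_meas_ge_le_lintegral hmeas.ennreal_ofReal _
      _ ≤ 1 := hint P hP
  exact (ENNReal.ofReal_le_iff_le_toReal (ENNReal.inv_ne_top.2 hx)).1
    (ENNReal.le_inv_iff_mul_le.2 markov)

theorem bddAbove_setOfPred_isEVar (hpos : ∀ x : X, 0 < ⨆ P ∈ H, P {x}) :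
    BddAbove {E : X → ℝ | IsEVar H E} := by
  have charged (x : X) : ∃ P ∈ H, P {x} ≠ 0 := by
    simpa only [lt_iSup_iff, exists_prop, pos_iff_ne_zero] using hpos x
  choose P hPH hP using charged
  exact ⟨fun x ↦ (P x {x})⁻¹.toReal, fun E hE x ↦ hE.apply_le_toReal_inv (hPH x) (hP x)⟩

theorem isClosed_setOfPred_isEVar [Countable X] [MeasurableSingletonClass X] :
    IsClosed {E : X → ℝ | IsEVar H E} := by
  refine IsSeqClosed.isClosed fun F E hF hFE ↦ ?_
  have hlim (x : X) : Tendsto (fun k ↦ F k x) atTop (𝓝 (E x)) := tendsto_pi_nhds.1 hFE x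
  refine ⟨measurable_of_countable E, fun x ↦ ge_of_tendsto' (hlim x) fun k ↦ (hF k).2.1 x,
    fun P hP ↦ ?_⟩
  calc ∫⁻ x, ENNReal.ofReal (E x) ∂P
    _ = ∫⁻ x, liminf (fun k ↦ ENNReal.ofReal (F k x)) atTop ∂P :=
      lintegral_congr fun x ↦ (ENNReal.tendsto_ofReal (hlim x)).liminf_eq.symm
    _ ≤ liminf (fun k ↦ ∫⁻ x, ENNReal.ofReal (F k x) ∂P) atTop :=
      lintegral_liminf_le fun k ↦ (hF k).1.ennreal_ofReal
    _ ≤ 1 := liminf_le_of_frequently_le' (Frequently.of_forall fun k ↦ (hF k).2.2 P hP)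

end EVariable

theorem statement2_general {α : Type*} [MeasurableSpace α] [MeasurableSingletonClass α] {X : Set α}
    (hX : X.Countable) (H : Set (Measure X)) (hpos : ∀ x : X, 0 < ⨆ P ∈ H, P {x}) :
    ∃ C, IsOptimalClass H C := by
  have : Countable X := hX
  refine ⟨_, isOptimalClass_setOfPred_isMaximalEVar fun E hE ↦ ?_⟩
  simp only [isMaximalEVar_iff_maximal]
  exact exists_le_maximal_of_isClosed_of_bddAbove isClosed_setOfPred_isEVar
    (bddAbove_setOfPred_isEVar hpos) hE

/-- if `X` is nonempty and finite and `sup_{P ∈ H} P({x}) > 0` for every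
`x ∈ X`, then an optimal e-class for `H` exists. -/
theorem statement2 {n : ℕ} {X : Set (EuclideanSpace ℝ (Fin n))}
    (hXf : X.Finite) (hXne : X.Nonempty)
    (H : Set (Measure X)) (hH : IsHypothesis H)
    (hpos : ∀ x : X, 0 < ⨆ P ∈ H, P {x}) :
    ∃ C, IsOptimalClass H C :=
  statement2_general hXf.countable H hpos
end

section
/- Let X = [0,1] ⊆ ℝ and let H = {P ∈ P_[0,1] : P({0}) ≥ 1/2} ∪ {U}, where U is the uniform (Lebesgue) distribution on [0,1]. Then H does not admit an optimal e-class. -/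
open MeasureTheory Set ENNReal

/-! Every element of an optimal e-class is a maximal e-variable: otherwise it could be replaced by
a strict majoriser. Hence an optimal e-class forces every e-variable to have a maximal majoriser.

For `H = {P : P({z}) ≥ p} ∪ K` with `K` atomless, the first part amounts to the pointwise
inequalities `p E(z) + (1 - p) E(x) ≤ 1`. A spike of height `c = 1 / (1 - p)` at a point `w ≠ z` is
therefore an e-variable, and each e-variable `E` majorising it has `p E(z) = 0` and `E ≤ c`. Raising
`E` to `c` at a single point other than `z` costs nothing under `K`, so a maximal such `E` equals
`c` off `z`. Its integral under a `Q ∈ K` of mass greater than `1 - p` then exceeds `1`.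
-/

section MajorisingClass

variable {α : Type*} [MeasurableSpace α] {X : Set α}
  {H K : Set (Measure X)} {C : Set (X → ℝ)} {E E' : X → ℝ}

theorem isEVar_union : IsEVar (H ∪ K) E ↔ IsEVar H E ∧ IsEVar K E := by
  simp only [IsEVar, mem_union, or_imp, forall_and]
  tauto

theorem isEVar_zero : IsEVar H 0 :=
  ⟨measurable_zero, fun _ => le_rfl, fun P _ => by simp⟩

theorem IsMaximalEVar.eq_of_majorises (hE : IsMaximalEVar H E) (hE' : IsEVar H E')
    (h : Majorises E' E) : E' = E :=
  by_contra fun hne => hE.2 ⟨E', hE', h, hne⟩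

theorem isMajorisingClass_setOf_ne (hE' : IsEVar H E') (h : Majorises E' E) (hne : E' ≠ E) :
    IsMajorisingClass H {F | IsEVar H F ∧ F ≠ E} := by
  refine ⟨fun F hF => hF.1, fun F hF => ?_⟩
  obtain rfl | hFE := eq_or_ne F E
  · exact ⟨E', ⟨hE', hne⟩, h⟩
  · exact ⟨F, ⟨hF, hFE⟩, fun _ => le_rfl⟩

theorem IsOptimalClass.isMaximalEVar (hC : IsOptimalClass H C) (hE : E ∈ C) :
    IsMaximalEVar H E := by
  refine ⟨hC.1.1 E hE, ?_⟩
  rintro ⟨E', hE', h, hne⟩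
  exact (hC.2 _ (isMajorisingClass_setOf_ne hE' h hne) hE).2 rfl

theorem IsOptimalClass.exists_isMaximalEVar_majorises (hC : IsOptimalClass H C)
    (hE : IsEVar H E) : ∃ E', IsMaximalEVar H E' ∧ Majorises E' E := by
  obtain ⟨E', hE'C, h⟩ := hC.1.2 E hE
  exact ⟨E', hC.isMaximalEVar hE'C, h⟩

end MajorisingClass

section PointUpdate

variable {β γ : Type*} [MeasurableSpace β]

theorem exists_ne_of_nullSingletonClass {P : Measure β} [NullSingletonClass P] (hP : P ≠ 0)
    (z : β) : ∃ w, w ≠ z := by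
  have : (ae P).NeBot := ae_neBot.2 hP
  exact (P.ae_ne z).exists

theorem update_ae_eq {P : Measure β} [NullSingletonClass P] [DecidableEq β] (f : β → γ) (y : β)
    (c : γ) : Function.update f y c =ᵐ[P] f := by
  filter_upwards [P.ae_ne y] with x hx
  exact Function.update_of_ne hx c f

theorem measurable_update_of_measurable [MeasurableSingletonClass β] [MeasurableSpace γ]
    [DecidableEq β] {f : β → γ} (hf : Measurable f) (y : β) (c : γ) :
    Measurable (Function.update f y c) := by
  rw [← piecewise_singleton y (fun _ => c) f]
  exact measurable_const.piecewise (measurableSet_singleton y) hf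

variable {α : Type*} [MeasurableSpace α] {X : Set α}

theorem IsEVar.update_of_nullSingletonClass [MeasurableSingletonClass X] [DecidableEq X]
    {K : Set (Measure X)} {E : X → ℝ} (hE : IsEVar K E) (hK : ∀ P ∈ K, NullSingletonClass P)
    (y : X) {c : ℝ} (hc : 0 ≤ c) : IsEVar K (Function.update E y c) := by
  obtain ⟨hmeas, hnonneg, hint⟩ := hE
  refine ⟨measurable_update_of_measurable hmeas y c, le_update_iff.2 ⟨hc, fun x _ => hnonneg x⟩,
    fun P hP => ?_⟩
  have := hK P hP
  calc ∫⁻ x, ENNReal.ofReal (Function.update E y c x) ∂P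
      = ∫⁻ x, ENNReal.ofReal (E x) ∂P :=
        lintegral_congr_ae ((update_ae_eq E y c).fun_comp ENNReal.ofReal)
    _ ≤ 1 := hint P hP

end PointUpdate

section MassAtLeast

variable {β : Type*} [MeasurableSpace β] {z : β} {p : ℝ≥0∞}

theorem smul_dirac_le_of_le_apply_singleton {P : Measure β} (h : p ≤ P {z}) :
    p • Measure.dirac z ≤ P := by
  refine Measure.le_iff.2 fun s hs => ?_
  rw [Measure.smul_apply, Measure.dirac_apply' z hs, smul_eq_mul]
  by_cases hzs : z ∈ s
  · simpa [hzs] using h.trans (measure_mono (singleton_subset_iff.2 hzs))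
  · simp [hzs]

/-- The probability measures with an atom of mass at least `p` at `z`. -/
def massAtLeast (z : β) (p : ℝ≥0∞) : Set (Measure β) :=
  {P | IsProbabilityMeasure P ∧ p ≤ P {z}}

theorem smul_dirac_add_smul_dirac_mem_massAtLeast (hp : p ≤ 1) (x : β) :
    p • Measure.dirac z + (1 - p) • Measure.dirac x ∈ massAtLeast z p := by
  refine ⟨⟨by simp [add_tsub_cancel_of_le hp]⟩, ?_⟩
  calc p = p * ({z} : Set β).indicator 1 z := by simp
    _ ≤ p * Measure.dirac z {z} := by gcongr; exact Measure.le_dirac_apply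
    _ ≤ _ := by simp [Measure.add_apply]

theorem exists_eq_smul_dirac_add {P : Measure β} (hP : P ∈ massAtLeast z p) :
    ∃ ν : Measure β, P = p • Measure.dirac z + ν ∧ ν univ = 1 - p := by
  obtain ⟨hprob, hz⟩ := hP
  have hp : p ≠ ∞ := ne_top_of_le_ne_top (measure_ne_top P {z}) hz
  have : IsFiniteMeasure (p • Measure.dirac z) := Measure.smul_finite _ hp
  have hsum : P - p • Measure.dirac z + p • Measure.dirac z = P :=
    Measure.sub_add_cancel_of_le (smul_dirac_le_of_le_apply_singleton hz)
  refine ⟨P - p • Measure.dirac z, by rw [add_comm, hsum], ?_⟩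
  refine ENNReal.eq_sub_of_add_eq hp ?_
  simpa using congrArg (· univ) hsum

theorem lintegral_le_one_of_mem_massAtLeast (hp : p < 1) {f : β → ℝ≥0∞} (hf : Measurable f)
    (h : ∀ x, p * f z + (1 - p) * f x ≤ 1) {P : Measure β} (hP : P ∈ massAtLeast z p) :
    ∫⁻ x, f x ∂P ≤ 1 := by
  -- As `ν` has mass `1 - p`, `(1 - p) ⟨p δ_z + ν, f⟩` is the integral of `p f(z) + (1 - p) f`
  -- against `ν`, to which the pointwise hypothesis applies.
  obtain ⟨ν, rfl, hν⟩ := exists_eq_smul_dirac_add hP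
  have hmul : (1 - p) * ∫⁻ x, f x ∂(p • Measure.dirac z + ν) ≤ (1 - p) * 1 :=
    calc (1 - p) * ∫⁻ x, f x ∂(p • Measure.dirac z + ν)
        = p * f z * (1 - p) + (1 - p) * ∫⁻ x, f x ∂ν := by
          rw [lintegral_add_measure, lintegral_smul_measure, lintegral_dirac' z hf, smul_eq_mul]
          ring
      _ = ∫⁻ x, p * f z + (1 - p) * f x ∂ν := by
          rw [lintegral_add_left measurable_const, lintegral_const, hν, lintegral_const_mul _ hf]
      _ ≤ ∫⁻ _, 1 ∂ν := lintegral_mono h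
      _ = (1 - p) * 1 := by rw [lintegral_const, hν, mul_comm]
  exact (ENNReal.mul_le_mul_iff_right (tsub_pos_of_lt hp).ne' (by finiteness)).1 hmul

end MassAtLeast

section MaximalEVar

theorem exists_nonneg_mul_ofReal_eq_one {a : ℝ≥0∞} (h0 : a ≠ 0) (htop : a ≠ ∞) :
    ∃ c : ℝ, 0 ≤ c ∧ a * ENNReal.ofReal c = 1 := by
  refine ⟨a⁻¹.toReal, toReal_nonneg, ?_⟩
  rw [ENNReal.ofReal_toReal (ENNReal.inv_ne_top.2 h0), ENNReal.mul_inv_cancel h0 htop]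

variable {α : Type*} [MeasurableSpace α] {X : Set α} {K : Set (Measure X)}
  {E : X → ℝ} {w y z : X} {p : ℝ≥0∞}

theorem isEVar_massAtLeast_iff (hp : p < 1) :
    IsEVar (massAtLeast z p) E ↔ Measurable E ∧ (∀ x, 0 ≤ E x) ∧
      ∀ x, p * ENNReal.ofReal (E z) + (1 - p) * ENNReal.ofReal (E x) ≤ 1 := by
  refine and_congr_right fun hmeas => and_congr_right fun _ => ⟨fun h x => ?_, fun h P hP =>
    lintegral_le_one_of_mem_massAtLeast hp hmeas.ennreal_ofReal h hP⟩
  have hx := h _ (smul_dirac_add_smul_dirac_mem_massAtLeast hp.le x)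
  simpa only [lintegral_add_measure, lintegral_smul_measure,
    lintegral_dirac' _ hmeas.ennreal_ofReal, smul_eq_mul] using hx

theorem IsEVar.update_of_ne [MeasurableSingletonClass X] [DecidableEq X] (hp : p < 1)
    (hE : IsEVar (massAtLeast z p) E) (hz : p * ENNReal.ofReal (E z) = 0) (hyz : y ≠ z)
    {c : ℝ} (hc : 0 ≤ c) (hpc : (1 - p) * ENNReal.ofReal c ≤ 1) :
    IsEVar (massAtLeast z p) (Function.update E y c) := by
  obtain ⟨hmeas, hnonneg, hbound⟩ := (isEVar_massAtLeast_iff hp).1 hE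
  refine (isEVar_massAtLeast_iff hp).2 ⟨measurable_update_of_measurable hmeas y c,
    le_update_iff.2 ⟨hc, fun x _ => hnonneg x⟩, fun x => ?_⟩
  rw [Function.update_of_ne hyz.symm]
  obtain rfl | hxy := eq_or_ne x y
  · rwa [Function.update_self, hz, zero_add]
  · rw [Function.update_of_ne hxy]
    exact hbound x

theorem IsEVar.mul_ofReal_apply_eq_zero_of_one_le (hp : p < 1)
    (hE : IsEVar (massAtLeast z p) E) (hw : 1 ≤ (1 - p) * ENNReal.ofReal (E w)) :
    p * ENNReal.ofReal (E z) = 0 := by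
  have hle : p * ENNReal.ofReal (E z) + 1 ≤ 0 + 1 := by
    rw [zero_add]
    exact (add_le_add_right hw _).trans (((isEVar_massAtLeast_iff hp).1 hE).2.2 w)
  exact nonpos_iff_eq_zero.1 ((ENNReal.add_le_add_iff_right one_ne_top).1 hle)

theorem IsMaximalEVar.mul_ofReal_apply_eq_one_of_ne [MeasurableSingletonClass X] (hp : p < 1)
    (hK : ∀ P ∈ K, NullSingletonClass P) (hE : IsMaximalEVar (massAtLeast z p ∪ K) E)
    (hz : p * ENNReal.ofReal (E z) = 0) (hyz : y ≠ z) :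
    (1 - p) * ENNReal.ofReal (E y) = 1 := by
  classical
  obtain ⟨c, hc, hpc⟩ := exists_nonneg_mul_ofReal_eq_one (tsub_pos_of_lt hp).ne' (by finiteness)
  obtain ⟨hEz, hEK⟩ := isEVar_union.1 hE.1
  have hupdate : IsEVar (massAtLeast z p ∪ K) (Function.update E y c) := isEVar_union.2
    ⟨hEz.update_of_ne hp hz hyz hc hpc.le, hEK.update_of_nullSingletonClass hK y hc⟩
  have hyc : E y ≤ c := by
    have hle : (1 - p) * ENNReal.ofReal (E y) ≤ (1 - p) * ENNReal.ofReal c := by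
      rw [hpc]
      simpa only [hz, zero_add] using ((isEVar_massAtLeast_iff hp).1 hEz).2.2 y
    exact (ENNReal.ofReal_le_ofReal_iff hc).1
      ((ENNReal.mul_le_mul_iff_right (tsub_pos_of_lt hp).ne' (by finiteness)).1 hle)
  have heq := hE.eq_of_majorises hupdate (le_update_self_iff.2 hyc)
  rw [← congrFun heq y, Function.update_self, hpc]

theorem IsMaximalEVar.mul_ofReal_apply_ne_zero [MeasurableSingletonClass X] {Q : Measure X}
    (hp : p < 1) (hK : ∀ P ∈ K, NullSingletonClass P) (hQK : Q ∈ K) (hQ : 1 - p < Q univ)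
    (hE : IsMaximalEVar (massAtLeast z p ∪ K) E) : p * ENNReal.ofReal (E z) ≠ 0 := by
  intro hz
  have := hK Q hQK
  have hconst : ∀ᵐ x ∂Q, (1 - p) * ENNReal.ofReal (E x) = 1 := by
    filter_upwards [Q.ae_ne z] with x hx
    exact hE.mul_ofReal_apply_eq_one_of_ne hp hK hz hx
  refine hQ.not_ge ?_
  calc Q univ = ∫⁻ x, (1 - p) * ENNReal.ofReal (E x) ∂Q := by
        rw [lintegral_congr_ae hconst, lintegral_one]
    _ = (1 - p) * ∫⁻ x, ENNReal.ofReal (E x) ∂Q := lintegral_const_mul _ hE.1.1.ennreal_ofReal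
    _ ≤ 1 - p := mul_le_of_le_one_right' (hE.1.2.2 Q (Or.inr hQK))

theorem statement4_general [MeasurableSingletonClass X] {Q : Measure X} (hp : p < 1)
    (hK : ∀ P ∈ K, NullSingletonClass P) (hQK : Q ∈ K) (hQ : 1 - p < Q univ) :
    ¬ ∃ C, IsOptimalClass (massAtLeast z p ∪ K) C := by
  classical
  rintro ⟨C, hC⟩
  have := hK Q hQK
  have hQ0 : Q ≠ 0 := Measure.measure_univ_ne_zero.1 (pos_of_gt hQ).ne'
  obtain ⟨w, hwz⟩ := exists_ne_of_nullSingletonClass hQ0 z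
  obtain ⟨c, hc, hpc⟩ := exists_nonneg_mul_ofReal_eq_one (tsub_pos_of_lt hp).ne' (by finiteness)
  have hspike : IsEVar (massAtLeast z p ∪ K) (Function.update 0 w c) := isEVar_union.2
    ⟨isEVar_zero.update_of_ne hp (by simp) hwz hc hpc.le,
      isEVar_zero.update_of_nullSingletonClass hK w hc⟩
  obtain ⟨E, hE, hmaj⟩ := hC.exists_isMaximalEVar_majorises hspike
  have hw : 1 ≤ (1 - p) * ENNReal.ofReal (E w) := by
    have hcw : c ≤ E w := by simpa using hmaj w
    calc 1 = (1 - p) * ENNReal.ofReal c := hpc.symm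
      _ ≤ (1 - p) * ENNReal.ofReal (E w) := by gcongr
  exact hE.mul_ofReal_apply_ne_zero hp hK hQK hQ
    ((isEVar_union.1 hE.1).1.mul_ofReal_apply_eq_zero_of_one_le hp hw)

end MaximalEVar

/-- for `X = [0,1]` and
`H = {P : P({0}) ≥ 1/2} ∪ {uniform distribution on [0,1]}`, no optimal e-class exists. -/
theorem statement4 :
    ¬ ∃ C, IsOptimalClass
      (({P : Measure (Set.Icc (0:ℝ) 1) | IsProbabilityMeasure P ∧
            (1 : ℝ≥0∞) / 2 ≤ P {⟨0, Set.mem_Icc.mpr (by norm_num)⟩}} ∪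
          {Measure.comap (Subtype.val : (Set.Icc (0:ℝ) 1) → ℝ) volume})) C := by
  have hatomless : NullSingletonClass (volume : Measure unitInterval) := inferInstance
  exact statement4_general (by norm_num) (forall_eq.2 hatomless) (mem_singleton _)
    (lt_of_lt_of_eq (by norm_num) (measure_univ (μ := (volume : Measure unitInterval))).symm)
end

section
/- Let X be a nonempty closed subset of ℝⁿ and H a properly constrained hypothesis on X. Then for every x ∈ X there exists P ∈ H whose support is a finite set containing x. -/
open MeasureTheory Set ENNReal

/-!
Let `y` be relatively interior to the convex hull of the image of `Φ`, as `y = 0` is for a proper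
constraint. The segment from `Φ x` to `y` can be prolonged slightly beyond `y` inside the hull, so
`y` lies strictly between `Φ x` and some `z` in the hull. A finitely supported `Q` with mean `z`
exists because the means of `Φ` under finitely supported probability measures form a convex set
containing the image of `Φ`. The corresponding mixture of `δ_x` and `Q` has mean `y` and charges
`x`.
-/

open scoped NNReal Topology

section IntrinsicInterior

lemma eventually_lineMap_mem_of_mem_intrinsicInterior {R V P : Type*} [Ring R]
    [TopologicalSpace R] [AddCommGroup V] [Module R V] [TopologicalSpace V] [ContinuousSMul R V]
    [TopologicalSpace P] [AddTorsor V P] [IsTopologicalAddTorsor P] {s : Set P} {x y : P}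
    (hx : x ∈ affineSpan R s) (hy : y ∈ intrinsicInterior R s) :
    ∀ᶠ t : R in 𝓝 0, AffineMap.lineMap y x t ∈ s := by
  obtain ⟨y, hy_interior, rfl⟩ := mem_intrinsicInterior.1 hy
  let γ : R → affineSpan R s := fun t ↦
    ⟨AffineMap.lineMap (y : P) x t, AffineMap.lineMap_mem t y.2 hx⟩
  have γ_continuous : Continuous γ := AffineMap.lineMap_continuous.subtype_mk _
  have γ_zero : γ 0 = y := Subtype.ext (AffineMap.lineMap_apply_zero _ _)
  have hs : (↑) ⁻¹' s ∈ 𝓝 (γ 0) := γ_zero ▸ mem_interior_iff_mem_nhds.1 hy_interior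
  exact γ_continuous.continuousAt.eventually_mem hs

variable {𝕜 E : Type*} [Field 𝕜] [LinearOrder 𝕜] [IsStrictOrderedRing 𝕜] [AddCommGroup E]
  [Module 𝕜 E]

lemma mem_openSegment_lineMap_of_neg (x y : E) {t : 𝕜} (ht : t < 0) :
    y ∈ openSegment 𝕜 x (AffineMap.lineMap y x t) := by
  have ht' : 0 < 1 - t := by linarith
  refine ⟨-t / (1 - t), 1 / (1 - t), div_pos (neg_pos.2 ht) ht', one_div_pos.2 ht', ?_, ?_⟩
  · field_simp
    ring
  · rw [AffineMap.lineMap_apply_module]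
    match_scalars <;> field_simp
    ring

variable [TopologicalSpace 𝕜] [OrderTopology 𝕜] [TopologicalSpace E] [IsTopologicalAddGroup E]
  [ContinuousSMul 𝕜 E]

lemma exists_mem_openSegment_of_mem_intrinsicInterior {s : Set E} {x y : E}
    (hx : x ∈ affineSpan 𝕜 s) (hy : y ∈ intrinsicInterior 𝕜 s) :
    ∃ z ∈ s, y ∈ openSegment 𝕜 x z := by
  obtain ⟨t, hts, ht⟩ :=
    ((eventually_lineMap_mem_of_mem_intrinsicInterior hx hy).filter_mono
      (nhdsWithin_le_nhds (s := Iio 0))).and self_mem_nhdsWithin |>.exists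
  exact ⟨_, hts, mem_openSegment_lineMap_of_neg x y ht⟩

end IntrinsicInterior

section Support

variable {Ω : Type*} [TopologicalSpace Ω] [MeasurableSpace Ω]

lemma msupport_eq_support (P : Measure Ω) : msupport P = P.support := by
  rw [Measure.support_eq_forall_isOpen]
  exact Set.ext fun _ ↦ forall_congr' fun _ ↦ forall_comm

lemma mem_support_dirac (x : Ω) : x ∈ (Measure.dirac x).support :=
  (Measure.mem_support_iff_forall x).2 fun U hU ↦ by
    simp [Measure.dirac_apply_of_mem (mem_of_mem_nhds hU)]

lemma support_dirac_subset [T1Space Ω] [MeasurableSingletonClass Ω] (x : Ω) :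
    (Measure.dirac x).support ⊆ {x} :=
  Measure.support_subset_of_isClosed isClosed_singleton (by simp [ae_dirac_eq])

end Support

section Mean

variable {Ω E : Type*} [TopologicalSpace Ω] [MeasurableSpace Ω] [NormedAddCommGroup E]
  [NormedSpace ℝ E]

/-- `P` is a probability measure with finite support under which `Φ` has mean `z`. Integrability is
required separately, since the Bochner integral of a non-integrable function is `0`. -/
structure IsFiniteSupportWithMean (Φ : Ω → E) (z : E) (P : Measure Ω) : Prop where
  isProbabilityMeasure : IsProbabilityMeasure P
  finite_support : P.support.Finite
  integrable : Integrable Φ P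
  integral_eq : ∫ ω, Φ ω ∂P = z

namespace IsFiniteSupportWithMean

lemma dirac [T1Space Ω] [MeasurableSingletonClass Ω] [CompleteSpace E] (Φ : Ω → E) (x : Ω) :
    IsFiniteSupportWithMean Φ (Φ x) (Measure.dirac x) where
  isProbabilityMeasure := inferInstance
  finite_support := (finite_singleton x).subset (support_dirac_subset x)
  integrable := integrable_dirac enorm_lt_top
  integral_eq := integral_dirac Φ x

lemma mixture {Φ : Ω → E} {z w : E} {P Q : Measure Ω} (hP : IsFiniteSupportWithMean Φ z P)
    (hQ : IsFiniteSupportWithMean Φ w Q) {a b : ℝ≥0} (hab : a + b = 1) :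
    IsFiniteSupportWithMean Φ (a • z + b • w) (a • P + b • Q) where
  isProbabilityMeasure := by
    have := hP.isProbabilityMeasure
    have := hQ.isProbabilityMeasure
    exact ⟨by simp [← ENNReal.coe_add, hab]⟩
  finite_support := by
    rw [Measure.support_add]
    exact (hP.finite_support.subset Measure.smul_absolutelyContinuous.support_mono).union
      (hQ.finite_support.subset Measure.smul_absolutelyContinuous.support_mono)
  integrable := hP.integrable.smul_measure_nnreal.add_measure hQ.integrable.smul_measure_nnreal
  integral_eq := by
    rw [integral_add_measure hP.integrable.smul_measure_nnreal hQ.integrable.smul_measure_nnreal,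
      integral_smul_nnreal_measure, integral_smul_nnreal_measure, hP.integral_eq, hQ.integral_eq]

end IsFiniteSupportWithMean

lemma convex_setOf_exists_isFiniteSupportWithMean (Φ : Ω → E) :
    Convex ℝ {z | ∃ P, IsFiniteSupportWithMean Φ z P} := by
  rintro z ⟨P, hP⟩ w ⟨Q, hQ⟩ a b ha hb hab
  lift a to ℝ≥0 using ha
  lift b to ℝ≥0 using hb
  exact ⟨a • P + b • Q, hP.mixture hQ (mod_cast hab)⟩

variable [T1Space Ω] [MeasurableSingletonClass Ω] [CompleteSpace E]

lemma exists_isFiniteSupportWithMean_of_mem_convexHull {Φ : Ω → E} {z : E}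
    (hz : z ∈ convexHull ℝ (range Φ)) : ∃ P, IsFiniteSupportWithMean Φ z P :=
  convexHull_min (range_subset_iff.2 fun x ↦ Set.mem_ofPred.2 ⟨_, .dirac Φ x⟩)
    (convex_setOf_exists_isFiniteSupportWithMean Φ) hz

lemma exists_isFiniteSupportWithMean_mem_support {Φ : Ω → E} {y : E}
    (hy : y ∈ intrinsicInterior ℝ (convexHull ℝ (range Φ))) (x : Ω) :
    ∃ P, IsFiniteSupportWithMean Φ y P ∧ x ∈ P.support := by
  have hx : Φ x ∈ affineSpan ℝ (convexHull ℝ (range Φ)) :=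
    subset_affineSpan ℝ _ (subset_convexHull ℝ _ (mem_range_self x))
  obtain ⟨z, hz, a, b, ha, hb, hab, rfl⟩ := exists_mem_openSegment_of_mem_intrinsicInterior hx hy
  obtain ⟨Q, hQ⟩ := exists_isFiniteSupportWithMean_of_mem_convexHull hz
  lift a to ℝ≥0 using ha.le
  lift b to ℝ≥0 using hb.le
  refine ⟨a • Measure.dirac x + b • Q,
    (IsFiniteSupportWithMean.dirac Φ x).mixture hQ (mod_cast hab), ?_⟩
  rw [Measure.support_add]
  have ha' : (a : ℝ≥0∞) ≠ 0 := ENNReal.coe_ne_zero.2 (NNReal.coe_pos.1 ha).ne'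
  exact .inl ((Measure.absolutelyContinuous_smul ha').support_mono (mem_support_dirac x))

end Mean

lemma memPPhi_of_integrable {α : Type*} [MeasurableSpace α] {X : Set α} {m : ℕ}
    {Φ : X → Fin m → ℝ} {P : Measure X} (hΦ : Integrable Φ P) : MemPPhi P Φ :=
  (integrable_finsetSum _ fun i _ ↦ (hΦ.eval i).abs).lintegral_lt_top

theorem statement6_general {α : Type*} [TopologicalSpace α] [T1Space α] [MeasurableSpace α]
    [MeasurableSingletonClass α] {X : Set α} {H : Set (Measure X)} (hpc : ProperlyConstrained H)
    (x : X) : ∃ P ∈ H, (msupport P).Finite ∧ x ∈ msupport P := by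
  obtain ⟨m, Φ, ⟨-, rfl⟩, h0⟩ := hpc
  obtain ⟨P, hP, hxP⟩ := exists_isFiniteSupportWithMean_mem_support h0 x
  rw [← msupport_eq_support] at hxP
  exact ⟨P, ⟨hP.isProbabilityMeasure, memPPhi_of_integrable hP.integrable, hP.integral_eq⟩,
    msupport_eq_support P ▸ hP.finite_support, hxP⟩

/-- if `H` is properly constrained, then every `x ∈ X` lies in the support
of some `P ∈ H` whose support is finite. -/
theorem statement6 {n : ℕ} {X : Set (EuclideanSpace ℝ (Fin n))}
    (hXc : IsClosed X) (hXne : X.Nonempty)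
    (H : Set (Measure X)) (hHne : H.Nonempty) (hpc : ProperlyConstrained H) :
    ∀ x : X, ∃ P ∈ H, (msupport P).Finite ∧ x ∈ msupport P :=
  statement6_general hpc
end

section
/- Let X be a nonempty closed subset of ℝⁿ. Every properly constrained hypothesis H on X admits a minimal constraint, i.e. a continuous Φ : X → ℝᵐ' for some m' with H = {P ∈ P_Φ : ⟨P,Φ⟩ = 0} and 0 in the interior of the convex hull of Φ(X). -/
open MeasureTheory Set ENNReal

/-!
Shrink the target of the proper constraint `Φ` to the linear span of its image, written in
coordinates: `Φ = J ∘ Ψ` with `J` linear, injective and onto that span. An injective linear map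
neither creates nor destroys integrability and vanishing integrals, so `Ψ` constrains the same
hypothesis. Since `0` lies in the convex hull of the image of `Φ`, the affine span of the image is
its linear span, that is, the range of `J`; hence `J` pulls the relative interior of the hull back
into the interior of the hull of the image of `Ψ`.
-/

section Convexity

variable {𝕜 V W : Type*}

lemma affineSpan_eq_span_of_zero_mem [Ring 𝕜] [AddCommGroup V] [Module 𝕜 V] {s : Set V}
    (h0 : (0 : V) ∈ affineSpan 𝕜 s) : (affineSpan 𝕜 s : Set V) = Submodule.span 𝕜 s := by
  rw [← affineSpan_insert_zero, affineSpan_insert_eq_affineSpan 𝕜 h0]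

lemma preimage_intrinsicInterior_subset_interior [Ring 𝕜] [AddCommGroup V] [Module 𝕜 V]
    [TopologicalSpace V] [TopologicalSpace W] {f : W → V} {s : Set V} (hf : Continuous f)
    (hfs : ∀ w, f w ∈ affineSpan 𝕜 s) :
    f ⁻¹' intrinsicInterior 𝕜 s ⊆ interior (f ⁻¹' s) := by
  let g : W → affineSpan 𝕜 s := fun w ↦ ⟨f w, hfs w⟩
  have hg : Continuous g := hf.subtype_mk hfs
  rintro w ⟨v, hv, hvw⟩
  obtain rfl : v = g w := Subtype.ext hvw
  exact preimage_interior_subset_interior_preimage hg hv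

lemma zero_mem_interior_convexHull_of_zero_mem_intrinsicInterior [Ring 𝕜] [PartialOrder 𝕜]
    [AddCommGroup V] [Module 𝕜 V] [TopologicalSpace V]
    [AddCommGroup W] [Module 𝕜 W] [TopologicalSpace W] {J : W →L[𝕜] V} {s : Set W}
    (hJ : Function.Injective J) (hrange : J.range = Submodule.span 𝕜 (J '' s))
    (h0 : (0 : V) ∈ intrinsicInterior 𝕜 (convexHull 𝕜 (J '' s))) :
    (0 : W) ∈ interior (convexHull 𝕜 s) := by
  have h0span : (0 : V) ∈ affineSpan 𝕜 (J '' s) :=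
    convexHull_subset_affineSpan _ (intrinsicInterior_subset h0)
  have hJspan (w : W) : J w ∈ affineSpan 𝕜 (convexHull 𝕜 (J '' s)) := by
    rw [affineSpan_convexHull, ← SetLike.mem_coe, affineSpan_eq_span_of_zero_mem h0span, ← hrange]
    exact ⟨w, rfl⟩
  have hpreimage : J ⁻¹' convexHull 𝕜 (J '' s) = convexHull 𝕜 s := by
    rw [← J.coe_coe, ← J.toLinearMap.image_convexHull, J.coe_coe, hJ.preimage_image]
  rw [← hpreimage]
  apply preimage_intrinsicInterior_subset_interior J.continuous hJspan
  rwa [Set.mem_preimage, map_zero]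

end Convexity

lemma exists_injective_comp_eq_range_eq_span {ι K V : Type*} [DivisionRing K] [AddCommGroup V]
    [Module K V] [FiniteDimensional K V] (Φ : ι → V) :
    ∃ (k : ℕ) (J : (Fin k → K) →ₗ[K] V) (Ψ : ι → Fin k → K), Function.Injective J ∧
      J.range = Submodule.span K (Set.range Φ) ∧ J ∘ Ψ = Φ := by
  let S := Submodule.span K (Set.range Φ)
  let e : S ≃ₗ[K] (Fin (Module.finrank K S) → K) := (Module.finBasis K S).equivFun
  let Φ' : ι → S := fun x ↦ ⟨Φ x, Submodule.subset_span ⟨x, rfl⟩⟩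
  refine ⟨_, S.subtype ∘ₗ e.symm, e ∘ Φ', ?_, ?_, ?_⟩
  · exact S.subtype_injective.comp e.symm.injective
  · rw [LinearMap.range_comp, LinearEquiv.range, Submodule.map_top, Submodule.range_subtype]
  · ext1 x
    simp [Φ']

section Constraint

variable {α : Type*} [TopologicalSpace α] [MeasurableSpace α] [OpensMeasurableSpace α] {X : Set α}

lemma memPPhi_iff_integrable {m : ℕ} {P : Measure X} {Φ : X → Fin m → ℝ} (hΦ : Continuous Φ) :
    MemPPhi P Φ ↔ Integrable Φ P := by
  have hcont : Continuous fun x ↦ WithLp.toLp 1 (Φ x) := (PiLp.continuous_toLp 1 _).comp hΦ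
  calc MemPPhi P Φ ↔ HasFiniteIntegral (fun x ↦ WithLp.toLp 1 (Φ x)) P := by
        simp only [MemPPhi, hasFiniteIntegral_iff_norm, PiLp.norm_eq_of_L1, Real.norm_eq_abs]
    _ ↔ Integrable (fun x ↦ WithLp.toLp 1 (Φ x)) P :=
        (and_iff_right hcont.aestronglyMeasurable).symm
    _ ↔ Integrable Φ P :=
        (PiLp.continuousLinearEquiv 1 ℝ fun _ : Fin m ↦ ℝ).symm.integrable_comp_iff

lemma isConstraint_comp_iff_of_injective {k m : ℕ} {H : Set (Measure X)}
    {J : (Fin k → ℝ) →L[ℝ] (Fin m → ℝ)} {Ψ : X → Fin k → ℝ} (hJ : Function.Injective J) :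
    IsConstraint H (J ∘ Ψ) ↔ IsConstraint H Ψ := by
  obtain ⟨K, -, hK⟩ := J.toLinearMap.injective_iff_antilipschitz.1 hJ
  have hcont : Continuous (J ∘ Ψ) ↔ Continuous Ψ :=
    (hK.isEmbedding J.continuous).continuous_iff.symm
  have hint (P : Measure X) : Integrable (J ∘ Ψ) P ↔ Integrable Ψ P :=
    J.lipschitz.integrable_comp_iff_of_antilipschitz hK J.map_zero
  have hzero (P : Measure X) : ∫ x, (J ∘ Ψ) x ∂P = 0 ↔ ∫ x, Ψ x ∂P = 0 := by
    simp only [Function.comp_apply, J.integral_comp_comm' hK]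
    exact map_eq_zero_iff J hJ
  unfold IsConstraint
  rw [hcont]
  refine and_congr_right fun hΨ ↦ ?_
  simp only [memPPhi_iff_integrable hΨ, memPPhi_iff_integrable (hcont.2 hΨ), hint, hzero]

theorem statement8_general {H : Set (Measure X)} (hpc : ProperlyConstrained H) :
    ∃ (m' : ℕ) (Φ : X → Fin m' → ℝ), IsMinimalConstraint H Φ := by
  obtain ⟨m, Φ, hΦ, h0⟩ := hpc
  obtain ⟨k, J, Ψ, hJ, hrange, rfl⟩ := exists_injective_comp_eq_range_eq_span (K := ℝ) Φ
  rw [Set.range_comp] at hrange h0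
  exact ⟨k, Ψ, (isConstraint_comp_iff_of_injective (J := J.toContinuousLinearMap) hJ).1 hΦ,
    zero_mem_interior_convexHull_of_zero_mem_intrinsicInterior (J := J.toContinuousLinearMap)
      hJ hrange h0⟩

end Constraint

/-- every properly constrained hypothesis admits a minimal constraint. -/
theorem statement8 {n : ℕ} {X : Set (EuclideanSpace ℝ (Fin n))}
    (hXc : IsClosed X) (hXne : X.Nonempty)
    (H : Set (Measure X)) (hHne : H.Nonempty) (hpc : ProperlyConstrained H) :
    ∃ (m' : ℕ) (Φ : X → Fin m' → ℝ), IsMinimalConstraint H Φ := by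
  exact statement8_general hpc
end
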